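/- arXiv:2511.03618 — 2 statements merged into one kernel-verified Lean document; each statement's English description precedes it below -/
import Mathlib

section
/- Let q* be the optimal action-value function of a finite MDP with state space S, action space A, reward r, transition p, and discount γ ∈ [0,1) (i.e., the unique fixed point of the Bellman optimality operator T*). Fix a behavior policy π such that the induced chain on S × A is irreducible and aperiodic, with stationary state-action weights d_π(s)π(a|s) > 0, and define the weighted Bellman optimality operator (T*' q)(s,a) = d_π(s)π(a|s)·[(T* q)(s,a) − q(s,a)] + q(s,a). Then T*' is a pseudo-contraction toward q* in the supremum norm: there exists γ' ∈ [0,1) such that for all q ∈ ℝ^{S×A}, ‖T*' q − q*‖_∞ ≤ γ'·‖q − q*‖_∞. -/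
/-!
The error of the weighted operator at `y` is the convex combination, with weights `d y` and
`1 - d y`, of the error of the Bellman operator, a `γ`-contraction in the supremum norm, and the
current error. It is therefore at most `1 - d y * (1 - γ)` times the supremum of the current error,
and since there are finitely many state-action pairs the smallest weight, if positive, gives a
uniform factor below `1`. Stationary weights are positive because irreducibility carries mass from
any charged pair to every other one.
-/

open Finset Matrix

/-- The set of return times of state `i` under the stochastic matrix `P`. -/
def returnTimes {Y : Type*} [Fintype Y] [DecidableEq Y] (P : Matrix Y Y ℝ) (i : Y) : Set ℕ :=
  {n | 1 ≤ n ∧ 0 < (P ^ n) i i}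

variable {S A : Type*} [Fintype S] [Fintype A] [Nonempty S] [Nonempty A]

/-- The Bellman optimality operator of a finite MDP. -/
noncomputable def bellmanOpt (r : S × A → ℝ) (p : S × A → S → ℝ) (γ : ℝ)
    (q : S × A → ℝ) : S × A → ℝ :=
  fun y => r y + γ * ∑ s', p y s' * ⨆ a', q (s', a')

/-- The weighted Bellman optimality operator with state-action weights `d`. -/
noncomputable def weightedBellmanOpt (r : S × A → ℝ) (p : S × A → S → ℝ) (γ : ℝ)
    (d : S × A → ℝ) (q : S × A → ℝ) : S × A → ℝ :=
  fun y => d y * (bellmanOpt r p γ q y - q y) + q y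

section Stationary

variable {R n : Type*} [Semiring R] [Fintype n] [DecidableEq n] {P : Matrix n n R} {d : n → R}

lemma vecMul_pow_eq_self (hd : d ᵥ* P = d) (k : ℕ) : d ᵥ* P ^ k = d := by
  induction k with
  | zero => rw [pow_zero, vecMul_one]
  | succ k ih => rw [pow_succ, ← vecMul_vecMul, ih, hd]

lemma pos_of_vecMul_eq_self [PartialOrder R] [IsOrderedRing R] [PosMulStrictMono R]
    (hP : ∀ i j, 0 ≤ P i j) (hirr : ∀ i j, ∃ k : ℕ, 0 < (P ^ k) i j)
    (hd_nonneg : ∀ i, 0 ≤ d i) (hd_ne : d ≠ 0) (hd : d ᵥ* P = d) (j : n) : 0 < d j := by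
  obtain ⟨i, hi⟩ : ∃ i, d i ≠ 0 := Function.ne_iff.mp hd_ne
  obtain ⟨k, hk⟩ := hirr i j
  calc 0 < d i * (P ^ k) i j := mul_pos ((hd_nonneg i).lt_of_ne' hi) hk
    _ ≤ ∑ l, d l * (P ^ k) l j :=
      single_le_sum (f := fun l => d l * (P ^ k) l j)
        (fun l _ => mul_nonneg (hd_nonneg l) (pow_apply_nonneg hP k l j)) (mem_univ i)
    _ = d j := congrFun (vecMul_pow_eq_self hd k) j

end Stationary

section SupNorm

variable {ι E : Type*} [Fintype ι] [SeminormedAddCommGroup E]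

lemma pi_norm_eq_iSup_norm (f : ι → E) : ‖f‖ = ⨆ i, ‖f i‖ := by
  have hbdd : BddAbove (Set.range fun i => ‖f i‖) := (Set.finite_range _).bddAbove
  refine le_antisymm ?_ (Real.iSup_le (norm_le_pi_norm f) (norm_nonneg f))
  exact (pi_norm_le_iff_of_nonneg (Real.iSup_nonneg fun i => norm_nonneg (f i))).mpr
    (le_ciSup hbdd)

lemma ciSup_sub_ciSup_le_norm [Nonempty ι] (f g : ι → ℝ) :
    (⨆ i, f i) - ⨆ i, g i ≤ ‖f - g‖ := by
  refine sub_le_iff_le_add'.mpr (ciSup_le fun i => ?_)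
  have hfg : f i - g i ≤ ‖f - g‖ := (le_abs_self _).trans (norm_le_pi_norm (f - g) i)
  have hg : g i ≤ ⨆ i, g i := le_ciSup (Set.finite_range g).bddAbove i
  linarith

lemma abs_ciSup_sub_ciSup_le_norm [Nonempty ι] (f g : ι → ℝ) :
    |(⨆ i, f i) - ⨆ i, g i| ≤ ‖f - g‖ :=
  abs_sub_le_iff.mpr
    ⟨ciSup_sub_ciSup_le_norm f g, norm_sub_rev f g ▸ ciSup_sub_ciSup_le_norm g f⟩

variable [NormedSpace ℝ E]

lemma norm_sum_smul_le_of_sum_le_one {w : ι → ℝ} (hw : ∀ i, 0 ≤ w i) (hsum : ∑ i, w i ≤ 1)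
    {v : ι → E} {C : ℝ} (hC : 0 ≤ C) (hv : ∀ i, ‖v i‖ ≤ C) : ‖∑ i, w i • v i‖ ≤ C :=
  calc ‖∑ i, w i • v i‖ ≤ ∑ i, w i * C :=
        norm_sum_le_of_le _ fun i _ => by
          rw [norm_smul, Real.norm_of_nonneg (hw i)]
          exact mul_le_mul_of_nonneg_left (hv i) (hw i)
    _ = (∑ i, w i) * C := (sum_mul _ _ _).symm
    _ ≤ C := mul_le_of_le_one_left hC hsum

lemma norm_convexCombination_le [Nonempty ι] {u v : ι → E} {d : ι → ℝ} {m c : ℝ}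
    (hd_nonneg : ∀ i, 0 ≤ d i) (hd_le : ∀ i, d i ≤ 1) (hm : ∀ i, m ≤ d i) (hc : c ≤ 1)
    (huv : ‖u‖ ≤ c * ‖v‖) :
    ‖fun i => d i • u i + (1 - d i) • v i‖ ≤ (1 - m * (1 - c)) * ‖v‖ := by
  refine (pi_norm_le_iff_of_nonempty _).mpr fun i => ?_
  have hd' : 0 ≤ 1 - d i := sub_nonneg.mpr (hd_le i)
  calc ‖d i • u i + (1 - d i) • v i‖
      ≤ d i * ‖u i‖ + (1 - d i) * ‖v i‖ := by
        refine (norm_add_le _ _).trans_eq ?_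
        rw [norm_smul, norm_smul, Real.norm_of_nonneg (hd_nonneg i), Real.norm_of_nonneg hd']
    _ ≤ d i * (c * ‖v‖) + (1 - d i) * ‖v‖ :=
        add_le_add (mul_le_mul_of_nonneg_left ((norm_le_pi_norm u i).trans huv) (hd_nonneg i))
          (mul_le_mul_of_nonneg_left (norm_le_pi_norm v i) hd')
    _ = (1 - d i * (1 - c)) * ‖v‖ := by ring
    _ ≤ (1 - m * (1 - c)) * ‖v‖ :=
        mul_le_mul_of_nonneg_right
          (sub_le_sub_left (mul_le_mul_of_nonneg_right (hm i) (sub_nonneg.mpr hc)) 1)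
          (norm_nonneg v)

end SupNorm

lemma norm_bellmanOpt_sub_le {S A : Type*} [Fintype S] [Fintype A] [Nonempty A]
    (r : S × A → ℝ) {p : S × A → S → ℝ} (hp_nonneg : ∀ y s', 0 ≤ p y s')
    (hp_sum : ∀ y, ∑ s', p y s' ≤ 1) {γ : ℝ} (hγ : 0 ≤ γ) (q q' : S × A → ℝ) :
    ‖bellmanOpt r p γ q - bellmanOpt r p γ q'‖ ≤ γ * ‖q - q'‖ := by
  refine (pi_norm_le_iff_of_nonneg (by positivity)).mpr fun y => ?_
  have hsub : (bellmanOpt r p γ q - bellmanOpt r p γ q') y =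
      γ * ∑ s', p y s' • ((⨆ a', q (s', a')) - ⨆ a', q' (s', a')) := by
    simp only [Pi.sub_apply, bellmanOpt, smul_eq_mul, mul_sub, sum_sub_distrib]
    ring
  have hmax (s' : S) : ‖(⨆ a', q (s', a')) - ⨆ a', q' (s', a')‖ ≤ ‖q - q'‖ :=
    (abs_ciSup_sub_ciSup_le_norm _ _).trans <|
      (pi_norm_le_iff_of_nonempty _).mpr fun a' => norm_le_pi_norm (q - q') (s', a')
  rw [hsub, norm_mul, Real.norm_of_nonneg hγ]
  exact mul_le_mul_of_nonneg_left
    (norm_sum_smul_le_of_sum_le_one (hp_nonneg y) (hp_sum y) (norm_nonneg _) hmax) hγ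

lemma weightedBellmanOpt_sub_eq {S A : Type*} [Fintype S] (r : S × A → ℝ) (p : S × A → S → ℝ)
    (γ : ℝ) (d q q₀ : S × A → ℝ) :
    weightedBellmanOpt r p γ d q - q₀ =
      fun y => d y • (bellmanOpt r p γ q - q₀) y + (1 - d y) • (q - q₀) y := by
  ext y
  simp only [weightedBellmanOpt, Pi.sub_apply, smul_eq_mul]
  ring

theorem weighted_bellman_pseudo_contraction_general
    {S A : Type*} [Fintype S] [Finite A] [Nonempty S] [Nonempty A]
    (r : S × A → ℝ) (p : S × A → S → ℝ)
    (hpnonneg : ∀ y s', 0 ≤ p y s') (hpsum : ∀ y, ∑ s', p y s' ≤ 1)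
    (γ : ℝ) (hγ0 : 0 ≤ γ) (hγ1 : γ < 1)
    (qstar : S × A → ℝ) (hqstar : bellmanOpt r p γ qstar = qstar)
    (d : S × A → ℝ) (hdpos : ∀ y, 0 < d y) (hdle : ∀ y, d y ≤ 1) :
    ∃ γ' : ℝ, 0 ≤ γ' ∧ γ' < 1 ∧ ∀ q : S × A → ℝ,
      (⨆ y : S × A, |weightedBellmanOpt r p γ d q y - qstar y|) ≤
        γ' * ⨆ y : S × A, |q y - qstar y| := by
  have := Fintype.ofFinite A
  obtain ⟨y₀, hmin⟩ := Finite.exists_min d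
  refine ⟨1 - d y₀ * (1 - γ), ?_, ?_, fun q => ?_⟩
  · exact sub_nonneg.mpr (mul_le_one₀ (hdle y₀) (sub_nonneg.mpr hγ1.le) (sub_le_self 1 hγ0))
  · exact sub_lt_self 1 (mul_pos (hdpos y₀) (sub_pos.mpr hγ1))
  have hcontr : ‖bellmanOpt r p γ q - qstar‖ ≤ γ * ‖q - qstar‖ := by
    simpa only [hqstar] using norm_bellmanOpt_sub_le r hpnonneg hpsum hγ0 q qstar
  have hnorm : ‖weightedBellmanOpt r p γ d q - qstar‖ ≤ (1 - d y₀ * (1 - γ)) * ‖q - qstar‖ := by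
    rw [weightedBellmanOpt_sub_eq]
    exact norm_convexCombination_le (fun y => (hdpos y).le) hdle hmin hγ1.le hcontr
  simpa only [pi_norm_eq_iSup_norm, Pi.sub_apply, Real.norm_eq_abs] using hnorm

/-- The weighted Bellman optimality operator is a pseudo-contraction towards the
optimal action-value function `q*` in the supremum norm, when the weights are the
stationary distribution of the irreducible aperiodic chain on `S × A` induced by a
fixed behavior policy `π`. -/
theorem weighted_bellman_pseudo_contraction
    [DecidableEq S] [DecidableEq A]
    (r : S × A → ℝ) (p : S × A → S → ℝ)
    (hpnonneg : ∀ y s', 0 ≤ p y s') (hpsum : ∀ y, ∑ s', p y s' = 1)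
    (γ : ℝ) (hγ0 : 0 ≤ γ) (hγ1 : γ < 1)
    (qstar : S × A → ℝ) (hqstar : bellmanOpt r p γ qstar = qstar)
    (π : S → A → ℝ) (hπnonneg : ∀ s a, 0 ≤ π s a) (hπsum : ∀ s, ∑ a, π s a = 1)
    -- the Markov chain on S × A induced by π
    (Pind : Matrix (S × A) (S × A) ℝ)
    (hPind : Pind = fun y y' => p y y'.1 * π y'.1 y'.2)
    (hirr : ∀ y y', ∃ n : ℕ, 0 < (Pind ^ n) y y')
    (haper : ∀ y, ∀ e : ℕ, (∀ n ∈ returnTimes Pind y, e ∣ n) → e = 1)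
    -- the stationary state-action weights
    (d : S × A → ℝ) (hdnonneg : ∀ y, 0 ≤ d y) (hdsum : ∑ y, d y = 1)
    (hdstat : ∀ y', ∑ y, d y * Pind y y' = d y') :
    ∃ γ' : ℝ, 0 ≤ γ' ∧ γ' < 1 ∧ ∀ q : S × A → ℝ,
      (⨆ y : S × A, |weightedBellmanOpt r p γ d q y - qstar y|) ≤
        γ' * ⨆ y : S × A, |q y - qstar y| := by
  have hP : ∀ y y', 0 ≤ Pind y y' := fun y y' =>
    hPind ▸ mul_nonneg (hpnonneg y y'.1) (hπnonneg y'.1 y'.2)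
  have hd_ne : d ≠ 0 := by
    rintro rfl
    simp at hdsum
  exact weighted_bellman_pseudo_contraction_general r p hpnonneg (fun y => (hpsum y).le) γ hγ0 hγ1
    qstar hqstar d (pos_of_vecMul_eq_self hP hirr hdnonneg hd_ne (funext hdstat))
    fun y => hdsum ▸ single_le_sum (fun y _ => hdnonneg y) (mem_univ y)
end

section
/- (Almost sure convergence of Q-learning with i.i.d. samples.) Consider a finite MDP with discount γ ∈ [0,1) and optimal action-value function q*. Fix a behavior policy π such that the induced chain on S × A is irreducible and aperiodic with stationary distribution μ on S × A. At each step t, draw (S_t, A_t) ~ μ independently across t and S_{t+1} ~ p(·|S_t, A_t), and update q_{t+1}(s,a) = q_t(s,a) + α_t·(r(S_t,A_t) + γ·max_b q_t(S_{t+1}, b) − q_t(S_t, A_t))·𝟙[(s,a) = (S_t, A_t)], where {α_t} satisfies the Robbins–Monro condition. Then q_t → q* almost surely. -/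
/-!
Given the past, the expected Q-learning increment moves each coordinate of `q` towards its Bellman
update by a fraction equal to the probability of observing that coordinate. Irreducibility makes all
these probabilities positive, so the averaged update is a contraction towards `q*` in the sup norm.

The iterates are bounded: with `B = max ‖q‖ (‖r‖ / (1 - γ))`, the sup norm stays below `B` as long
as the step size is at most one, and a larger step `a` inflates `B` by at most `1 + a ^ 2`. The
noise terms `α_t • (increment - conditional mean)` are therefore the differences of an `L²`-bounded
martingale and form an almost surely convergent series. Subtracting the tail of that series from the
iterates leaves a deterministic contraction with vanishing errors, which the divergence of `∑ α_t`
drives to `q*`.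
-/

open Finset Matrix MeasureTheory Filter

variable {S A : Type*} [Fintype S] [Fintype A] [Nonempty S] [Nonempty A]

section SquareIntegrableMartingales

open ProbabilityTheory

variable {Ω : Type*} {mΩ : MeasurableSpace Ω} {μ : Measure Ω}

lemma integral_mul_eq_zero_of_condExp_eq_zero {m : MeasurableSpace Ω} (hm : m ≤ mΩ)
    [SigmaFinite (μ.trim hm)] {f g : Ω → ℝ} (hfm : StronglyMeasurable[m] f)
    (hf : MemLp f 2 μ) (hg : MemLp g 2 μ) (hg_int : Integrable g μ) (hcond : μ[g | m] =ᵐ[μ] 0) :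
    ∫ ω, f ω * g ω ∂μ = 0 := by
  have hpull : μ[f * g | m] =ᵐ[μ] 0 := by
    filter_upwards [condExp_mul_of_stronglyMeasurable_left hfm (hf.integrable_mul hg) hg_int, hcond]
      with ω hω hω'
    simp [hω, hω']
  calc ∫ ω, f ω * g ω ∂μ = ∫ ω, μ[f * g | m] ω ∂μ := (integral_condExp hm).symm
    _ = 0 := integral_eq_zero_of_ae hpull

variable [IsFiniteMeasure μ] {ℱ : Filtration ℕ mΩ} {X : ℕ → Ω → ℝ}

lemma stronglyMeasurable_sum_range (hX : ∀ k, StronglyMeasurable[ℱ (k + 1)] (X k)) (n : ℕ) :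
    StronglyMeasurable[ℱ n] fun ω => ∑ k ∈ range n, X k ω :=
  Finset.stronglyMeasurable_fun_sum _ fun k hk => (hX k).mono (ℱ.mono (by grind))

lemma martingale_sum_range_of_condExp_eq_zero
    (hX : ∀ k, StronglyMeasurable[ℱ (k + 1)] (X k)) (hX_int : ∀ k, Integrable (X k) μ)
    (hcond : ∀ k, μ[X k | ℱ k] =ᵐ[μ] 0) :
    Martingale (fun n ω => ∑ k ∈ range n, X k ω) ℱ μ := by
  refine martingale_of_condExp_sub_eq_zero_nat (stronglyMeasurable_sum_range hX)
    (fun n => integrable_finsetSum _ fun k _ => hX_int k) fun n => ?_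
  have hincr : (fun ω => ∑ k ∈ range (n + 1), X k ω) - (fun ω => ∑ k ∈ range n, X k ω) = X n := by
    ext ω
    simp [sum_range_succ]
  simpa only [hincr] using hcond n

lemma integral_sq_sum_range_of_condExp_eq_zero
    (hX : ∀ k, StronglyMeasurable[ℱ (k + 1)] (X k)) (hL2 : ∀ k, MemLp (X k) 2 μ)
    (hcond : ∀ k, μ[X k | ℱ k] =ᵐ[μ] 0) (n : ℕ) :
    ∫ ω, (∑ k ∈ range n, X k ω) ^ 2 ∂μ = ∑ k ∈ range n, ∫ ω, X k ω ^ 2 ∂μ := by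
  induction n with
  | zero => simp
  | succ n ih =>
    have hS : MemLp (fun ω => ∑ k ∈ range n, X k ω) 2 μ := memLp_finsetSum _ fun k _ => hL2 k
    have hcross : ∫ ω, (∑ k ∈ range n, X k ω) * X n ω ∂μ = 0 :=
      integral_mul_eq_zero_of_condExp_eq_zero (ℱ.le n) (stronglyMeasurable_sum_range hX n) hS
        (hL2 n) ((hL2 n).integrable one_le_two) (hcond n)
    have hcross_int : Integrable (fun ω => 2 * ((∑ k ∈ range n, X k ω) * X n ω)) μ :=
      (hS.integrable_mul (hL2 n)).const_mul 2
    have hsq_int : Integrable (fun ω => (∑ k ∈ range n, X k ω) ^ 2 + X n ω ^ 2) μ :=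
      hS.integrable_sq.add (hL2 n).integrable_sq
    simp only [sum_range_succ, add_sq', mul_assoc]
    rw [integral_add hsq_int hcross_int,
      integral_add hS.integrable_sq (hL2 n).integrable_sq, integral_const_mul, hcross, ih,
      mul_zero, add_zero]

lemma eLpNorm_one_le_of_integral_sq_le {f : Ω → ℝ} (hf : MemLp f 2 μ) {R : ℝ}
    (hR : ∫ ω, f ω ^ 2 ∂μ ≤ R) :
    eLpNorm f 1 μ ≤ ENNReal.ofReal (μ.real Set.univ + R) := by
  rw [eLpNorm_one_eq_lintegral_enorm,
    ← ofReal_integral_norm_eq_lintegral_enorm (hf.integrable one_le_two)]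
  apply ENNReal.ofReal_le_ofReal
  calc ∫ ω, ‖f ω‖ ∂μ ≤ ∫ ω, (1 + f ω ^ 2) ∂μ := by
        refine integral_mono (hf.integrable one_le_two).norm
          ((integrable_const 1).add hf.integrable_sq) fun ω => ?_
        rw [Real.norm_eq_abs]
        nlinarith [sq_abs (f ω), sq_nonneg (|f ω| - 1), abs_nonneg (f ω)]
    _ = μ.real Set.univ + ∫ ω, f ω ^ 2 ∂μ := by
        rw [integral_add (integrable_const 1) hf.integrable_sq]
        simp
    _ ≤ μ.real Set.univ + R := by gcongr

theorem ae_exists_tendsto_sum_range_of_condExp_eq_zero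
    (hX : ∀ k, StronglyMeasurable[ℱ (k + 1)] (X k)) (hL2 : ∀ k, MemLp (X k) 2 μ)
    (hcond : ∀ k, μ[X k | ℱ k] =ᵐ[μ] 0) (hsum : Summable fun k => ∫ ω, X k ω ^ 2 ∂μ) :
    ∀ᵐ ω ∂μ, ∃ L, Tendsto (fun n => ∑ k ∈ range n, X k ω) atTop (nhds L) := by
  have hmart := martingale_sum_range_of_condExp_eq_zero hX
    (fun k => (hL2 k).integrable one_le_two) hcond
  have hbdd : ∀ n, ∫ ω, (∑ k ∈ range n, X k ω) ^ 2 ∂μ ≤ ∑' k, ∫ ω, X k ω ^ 2 ∂μ := fun n => by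
    rw [integral_sq_sum_range_of_condExp_eq_zero hX hL2 hcond]
    exact hsum.sum_le_tsum _ fun k _ => integral_nonneg fun ω => sq_nonneg _
  filter_upwards [hmart.submartingale.ae_tendsto_limitProcess fun n =>
    eLpNorm_one_le_of_integral_sq_le (memLp_finsetSum _ fun k _ => hL2 k) (hbdd n)] with ω hω
  exact ⟨_, hω⟩

lemma condExp_sub_condExp_eq_zero {m : MeasurableSpace Ω} (hm : m ≤ mΩ) {f : Ω → ℝ}
    (hf : Integrable f μ) : μ[f - μ[f | m] | m] =ᵐ[μ] 0 := by
  filter_upwards [condExp_sub hf integrable_condExp m] with ω hω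
  rw [hω, condExp_of_stronglyMeasurable hm stronglyMeasurable_condExp integrable_condExp]
  simp

theorem ae_exists_tendsto_sum_range_mul_sub_condExp {U : ℕ → Ω → ℝ} {C : ℝ} {α : ℕ → ℝ}
    (hU : ∀ k, StronglyMeasurable[ℱ (k + 1)] (U k)) (hbdd : ∀ k, ∀ᵐ ω ∂μ, |U k ω| ≤ C)
    (hα : Summable fun k => α k ^ 2) :
    ∀ᵐ ω ∂μ, ∃ L, Tendsto (fun n => ∑ k ∈ range n, α k * (U k ω - μ[U k | ℱ k] ω)) atTop
      (nhds L) := by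
  have hmeas : ∀ k, StronglyMeasurable[ℱ (k + 1)] fun ω => α k * (U k ω - μ[U k | ℱ k] ω) :=
    fun k => ((hU k).sub (stronglyMeasurable_condExp.mono (ℱ.mono k.le_succ))).const_mul _
  have hnoise_bdd : ∀ k, ∀ᵐ ω ∂μ, |α k * (U k ω - μ[U k | ℱ k] ω)| ≤ |α k| * (2 * C) := fun k => by
    filter_upwards [hbdd k, ae_bdd_abs_condExp_of_ae_bdd_abs (m := ℱ k) (hbdd k)] with ω h h'
    rw [abs_mul]
    gcongr
    linarith [abs_sub (U k ω) (μ[U k | ℱ k] ω)]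
  refine ae_exists_tendsto_sum_range_of_condExp_eq_zero hmeas
    (fun k => .of_bound ((hmeas k).mono (ℱ.le _)).aestronglyMeasurable _ (hnoise_bdd k))
    (fun k => ?_) ?_
  · have hU_int : Integrable (U k) μ :=
      .of_bound ((hU k).mono (ℱ.le _)).aestronglyMeasurable C (hbdd k)
    filter_upwards [condExp_smul (α k) (U k - μ[U k | ℱ k]) (ℱ k),
      condExp_sub_condExp_eq_zero (ℱ.le k) hU_int] with ω h h'
    exact h.trans (by simp [h'])
  · refine .of_nonneg_of_le (fun k => integral_nonneg fun ω => sq_nonneg _) (fun k => ?_)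
      (hα.mul_right ((2 * C) ^ 2 * μ.real Set.univ))
    calc ∫ ω, (α k * (U k ω - μ[U k | ℱ k] ω)) ^ 2 ∂μ
        ≤ ∫ _, (|α k| * (2 * C)) ^ 2 ∂μ := by
          refine integral_mono_of_nonneg (ae_of_all _ fun ω => sq_nonneg _)
            (integrable_const _) ?_
          filter_upwards [hnoise_bdd k] with ω hω
          exact sq_le_sq' (abs_le.mp hω).1 (abs_le.mp hω).2
      _ = α k ^ 2 * ((2 * C) ^ 2 * μ.real Set.univ) := by
          rw [integral_const, smul_eq_mul, mul_pow, sq_abs]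
          ring

end SquareIntegrableMartingales

section PerturbedContractions

variable {α : ℕ → ℝ}

lemma tendsto_prod_Ico_one_sub_mul_zero {c : ℝ} (hc : 0 < c) {T : ℕ}
    (hα : ∀ t ≥ T, c * α t ≤ 1)
    (hαsum : Tendsto (fun n => ∑ k ∈ range n, α k) atTop atTop) :
    Tendsto (fun n => ∏ k ∈ Ico T n, (1 - c * α k)) atTop (nhds 0) := by
  have hexp : Tendsto
      (fun n => Real.exp (-(c * (∑ k ∈ range n, α k - ∑ k ∈ range T, α k)))) atTop (nhds 0) :=
    Real.tendsto_exp_atBot.comp <| tendsto_neg_atTop_atBot.comp <|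
      (tendsto_atTop_add_const_right _ _ hαsum).const_mul_atTop hc
  refine squeeze_zero'
    (.of_forall fun n => prod_nonneg fun k hk => sub_nonneg.2 (hα k (mem_Ico.1 hk).1)) ?_ hexp
  filter_upwards [eventually_ge_atTop T] with n hn
  calc ∏ k ∈ Ico T n, (1 - c * α k) ≤ ∏ k ∈ Ico T n, Real.exp (-(c * α k)) :=
        prod_le_prod (fun k hk => sub_nonneg.2 (hα k (mem_Ico.1 hk).1))
          fun k _ => Real.one_sub_le_exp_neg _
    _ = Real.exp (-(c * (∑ k ∈ range n, α k - ∑ k ∈ range T, α k))) := by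
        rw [← Real.exp_sum, sum_neg_distrib, ← mul_sum, sum_Ico_eq_sub _ hn]

lemma tendsto_zero_of_contracting_recursion {a ε : ℕ → ℝ} {c : ℝ} (hc : 0 < c)
    (ha : ∀ t, 0 ≤ a t) (hα : ∀ t, 0 ≤ α t) (hαlim : Tendsto α atTop (nhds 0))
    (hαsum : Tendsto (fun n => ∑ k ∈ range n, α k) atTop atTop)
    (hε : Tendsto ε atTop (nhds 0))
    (hrec : ∀ᶠ t in atTop, a (t + 1) ≤ (1 - c * α t) * a t + α t * ε t) :
    Tendsto a atTop (nhds 0) := by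
  refine tendsto_order.2 ⟨fun b hb => .of_forall fun t => hb.trans_le (ha t), fun δ hδ => ?_⟩
  have hcα : Tendsto (fun t => c * α t) atTop (nhds 0) := by simpa using hαlim.const_mul c
  obtain ⟨T, hT⟩ := eventually_atTop.1 <|
    (hcα.eventually_le_const one_pos).and <|
      (hε.eventually_le_const (show 0 < c * (δ / 2) by positivity)).and hrec
  have hcontract : ∀ t ≥ T, a (t + 1) - δ / 2 ≤ (1 - c * α t) * (a t - δ / 2) + 0 := by
    intro t ht
    obtain ⟨-, hεt, hat⟩ := hT t ht
    linarith [mul_le_mul_of_nonneg_left hεt (hα t)]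
  have hprod : Tendsto (fun n => (a T - δ / 2) * ∏ k ∈ Ico T n, (1 - c * α k)) atTop (nhds 0) := by
    simpa using
      (tendsto_prod_Ico_one_sub_mul_zero hc (fun t ht => (hT t ht).1) hαsum).const_mul (a T - δ / 2)
  filter_upwards [hprod.eventually_lt_const (half_pos hδ), eventually_ge_atTop T] with n hn hTn
  have hgronwall := discrete_gronwall_prod_general
    (u := fun t => a t - δ / 2) (b := fun _ => 0) hcontract
    (fun t ht => sub_nonneg.2 (hT t ht).1) hTn
  simp only [zero_mul, sum_const_zero, add_zero] at hgronwall
  linarith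

variable {E : Type*} [NormedAddCommGroup E] [NormedSpace ℝ E] {xstar : E} {κ : ℝ}

lemma tendsto_of_inexact_contraction (hκ : κ < 1)
    (hα : ∀ t, 0 ≤ α t) (hαlim : Tendsto α atTop (nhds 0))
    (hαsum : Tendsto (fun n => ∑ k ∈ range n, α k) atTop atTop)
    {z g : ℕ → E} {ε : ℕ → ℝ} (hε : Tendsto ε atTop (nhds 0))
    (hg : ∀ t, ‖g t - xstar‖ ≤ κ * ‖z t - xstar‖ + ε t)
    (hz : ∀ t, z (t + 1) = z t + α t • (g t - z t)) :
    Tendsto z atTop (nhds xstar) := by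
  refine tendsto_iff_norm_sub_tendsto_zero.2 <| tendsto_zero_of_contracting_recursion
    (sub_pos.2 hκ) (fun t => norm_nonneg _) hα hαlim hαsum hε ?_
  filter_upwards [hαlim.eventually_le_const one_pos] with t hαt
  calc ‖z (t + 1) - xstar‖ = ‖(1 - α t) • (z t - xstar) + α t • (g t - xstar)‖ := by
        rw [hz]
        congr 1
        module
    _ ≤ (1 - α t) * ‖z t - xstar‖ + α t * ‖g t - xstar‖ := by
        refine (norm_add_le _ _).trans_eq ?_
        rw [norm_smul_of_nonneg (sub_nonneg.2 hαt), norm_smul_of_nonneg (hα t)]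
    _ ≤ (1 - α t) * ‖z t - xstar‖ + α t * (κ * ‖z t - xstar‖ + ε t) := by
        gcongr
        exacts [hα t, hg t]
    _ = (1 - (1 - κ) * α t) * ‖z t - xstar‖ + α t * ε t := by ring

theorem tendsto_of_perturbed_contraction {G : E → E} (hκ0 : 0 ≤ κ) (hκ1 : κ < 1)
    (hG : ∀ y, ‖G y - xstar‖ ≤ κ * ‖y - xstar‖)
    (hα : ∀ t, 0 ≤ α t) (hαlim : Tendsto α atTop (nhds 0))
    (hαsum : Tendsto (fun n => ∑ k ∈ range n, α k) atTop atTop)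
    {x d : ℕ → E} {L : E} (hd : Tendsto (fun n => ∑ k ∈ range n, d k) atTop (nhds L))
    (hx : ∀ t, x (t + 1) = x t + α t • (G (x t) - x t) + d t) :
    Tendsto x atTop (nhds xstar) := by
  -- Adding the noise still to come absorbs the noise term into an error that tends to zero.
  set e : ℕ → E := fun t => L - ∑ k ∈ range t, d k with he
  have he_lim : Tendsto e atTop (nhds 0) := by simpa using hd.const_sub L
  have hε : Tendsto (fun t => (κ + 1) * ‖e t‖) atTop (nhds 0) := by
    simpa using he_lim.norm.const_mul (κ + 1)
  have hshift : Tendsto (fun t => x t + e t) atTop (nhds xstar) := by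
    refine tendsto_of_inexact_contraction hκ1 hα hαlim hαsum hε
      (g := fun t => G (x t) + e t) (fun t => ?_) fun t => ?_
    · have hxz : ‖x t - xstar‖ ≤ ‖x t + e t - xstar‖ + ‖e t‖ := by
        simpa [add_sub_right_comm] using norm_sub_le (x t + e t - xstar) (e t)
      calc ‖G (x t) + e t - xstar‖ ≤ ‖G (x t) - xstar‖ + ‖e t‖ := by
            rw [add_sub_right_comm]
            exact norm_add_le _ _
        _ ≤ κ * (‖x t + e t - xstar‖ + ‖e t‖) + ‖e t‖ := by
            gcongr
            exact (hG _).trans (by gcongr)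
        _ = κ * ‖x t + e t - xstar‖ + (κ + 1) * ‖e t‖ := by ring
    · simp only [he, hx, sum_range_succ]
      module
  simpa using hshift.sub he_lim

end PerturbedContractions

theorem ae_tendsto_of_stochastic_approximation {Ω ι : Type*} {mΩ : MeasurableSpace Ω} [Fintype ι]
    {μ : Measure Ω} [IsFiniteMeasure μ] {ℱ : Filtration ℕ mΩ} {α : ℕ → ℝ}
    {G : (ι → ℝ) → ι → ℝ} {xstar : ι → ℝ} {κ : ℝ} (hκ0 : 0 ≤ κ) (hκ1 : κ < 1)
    (hG : ∀ y, ‖G y - xstar‖ ≤ κ * ‖y - xstar‖)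
    (hα : ∀ t, 0 ≤ α t) (hαsum : Tendsto (fun n => ∑ k ∈ range n, α k) atTop atTop)
    (hαsq : Summable fun t => α t ^ 2) {x U : ℕ → Ω → ι → ℝ} {C : ℝ}
    (hU : ∀ t i, StronglyMeasurable[ℱ (t + 1)] fun ω => U t ω i)
    (hbdd : ∀ t, ∀ᵐ ω ∂μ, ‖U t ω‖ ≤ C)
    (hmean : ∀ t i, μ[fun ω => U t ω i | ℱ t] =ᵐ[μ] fun ω => G (x t ω) i - x t ω i)
    (hx : ∀ t ω, x (t + 1) ω = x t ω + α t • U t ω) :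
    ∀ᵐ ω ∂μ, Tendsto (fun t => x t ω) atTop (nhds xstar) := by
  have hαlim : Tendsto α atTop (nhds 0) := by
    simpa [Real.sqrt_sq (hα _)] using hαsq.tendsto_atTop_zero.sqrt
  have hnoise : ∀ᵐ ω ∂μ, ∀ i, ∃ L, Tendsto
      (fun n => ∑ k ∈ range n, α k * (U k ω i - μ[fun ω => U k ω i | ℱ k] ω)) atTop (nhds L) :=
    ae_all_iff.2 fun i => ae_exists_tendsto_sum_range_mul_sub_condExp (fun k => hU k i)
      (fun k => (hbdd k).mono fun ω hω => (norm_le_pi_norm _ i).trans hω) hαsq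
  filter_upwards [hnoise, ae_all_iff.2 fun t => ae_all_iff.2 (hmean t)] with ω hnoiseω hmeanω
  choose L hL using hnoiseω
  refine tendsto_of_perturbed_contraction hκ0 hκ1 hG hα hαlim hαsum (L := L)
    (d := fun t => α t • (U t ω - (G (x t ω) - x t ω))) (tendsto_pi_nhds.2 fun i => ?_) fun t => ?_
  · simpa [hmeanω] using hL i
  · rw [hx]
    module

section Independence

open ProbabilityTheory

variable {Ω Y : Type*} {mΩ : MeasurableSpace Ω} {μ : Measure Ω} [MeasurableSpace Y]

lemma condExp_indicator_of_indep [IsFiniteMeasure μ] {m m₁ : MeasurableSpace Ω} (hm : m ≤ mΩ)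
    (hm₁ : m₁ ≤ mΩ) (hindep : Indep m₁ m μ) {s : Set Ω} (hs : MeasurableSet[m₁] s) {f : Ω → ℝ}
    (hf : StronglyMeasurable[m] f) (hf_int : Integrable f μ) :
    μ[s.indicator f | m] =ᵐ[μ] fun ω => μ.real s * f ω := by
  have hind : s.indicator f = s.indicator (1 : Ω → ℝ) * f := by
    ext ω
    by_cases h : ω ∈ s <;> simp [h]
  have hcond : μ[s.indicator (1 : Ω → ℝ) | m] =ᵐ[μ] fun _ => μ.real s := by
    rw [← integral_indicator_one (hm₁ _ hs)]
    exact condExp_indep_eq hm₁ hm (stronglyMeasurable_one.indicator hs) hindep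
  have hone_int : Integrable (s.indicator (1 : Ω → ℝ)) μ :=
    (integrable_const 1).indicator (hm₁ _ hs)
  rw [hind]
  filter_upwards [condExp_mul_of_stronglyMeasurable_right hf
    (hind ▸ hf_int.indicator (hm₁ _ hs)) hone_int, hcond] with ω h h'
  rw [h, Pi.mul_apply, h']

lemma condExp_apply_of_indep [IsFiniteMeasure μ] [Fintype Y] [MeasurableSingletonClass Y]
    {Z : Ω → Y} (hZ : Measurable Z) {m : MeasurableSpace Ω} (hm : m ≤ mΩ)
    (hindep : Indep (MeasurableSpace.comap Z inferInstance) m μ) {φ : Y → Ω → ℝ}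
    (hφ : ∀ z, StronglyMeasurable[m] (φ z)) (hφ_int : ∀ z, Integrable (φ z) μ) :
    μ[fun ω => φ (Z ω) ω | m] =ᵐ[μ] fun ω => ∑ z, μ.real (Z ⁻¹' {z}) * φ z ω := by
  have hZ_meas : ∀ z, MeasurableSet[MeasurableSpace.comap Z inferInstance] (Z ⁻¹' {z}) :=
    fun z => ⟨_, measurableSet_singleton z, rfl⟩
  have hdecomp : (fun ω => φ (Z ω) ω) = ∑ z, (Z ⁻¹' {z}).indicator (φ z) := by
    classical
    ext ω
    simp [Set.indicator_apply]
  rw [hdecomp]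
  filter_upwards [condExp_finsetSum
      (fun z _ => (hφ_int z).indicator (hZ.comap_le _ (hZ_meas z))) m,
    ae_all_iff.2 fun z =>
      condExp_indicator_of_indep hm hZ.comap_le hindep (hZ_meas z) (hφ z) (hφ_int z)] with ω h h'
  rw [h, Finset.sum_apply]
  exact sum_congr rfl fun z _ => h' z

/-- The filtration of the strict past of a process: at time `n` only `Z i` with `i < n` has been
observed, so that an independent `Z n` is independent of the past at its own index. -/
def pastFiltration {Z : ℕ → Ω → Y} (hZ : ∀ n, Measurable (Z n)) : Filtration ℕ mΩ where
  seq n := ⨆ i ∈ Set.Iio n, MeasurableSpace.comap (Z i) inferInstance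
  mono' _ _ hmn := biSup_mono fun _ hi => lt_of_lt_of_le hi hmn
  le' _ := iSup₂_le fun i _ => (hZ i).comap_le

namespace pastFiltration

variable {Z : ℕ → Ω → Y}

lemma measurable_succ (hZ : ∀ n, Measurable (Z n)) (n : ℕ) :
    Measurable[pastFiltration hZ (n + 1)] (Z n) :=
  Measurable.of_comap_le (le_biSup (fun i => MeasurableSpace.comap (Z i) _) (Nat.lt_succ_self n))

lemma indep (hZ : ∀ n, Measurable (Z n)) (hindep : iIndepFun Z μ) (n : ℕ) :
    Indep (MeasurableSpace.comap (Z n) inferInstance) (pastFiltration hZ n) μ := by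
  have := indep_iSup_of_disjoint (fun i => (hZ i).comap_le) hindep.iIndep
    (Set.disjoint_singleton_left.2 (Set.self_notMem_Iio (a := n)))
  rwa [_root_.iSup_singleton] at this

variable [Countable Y] [MeasurableSingletonClass Y] {E E' : Type*} [MeasurableSpace E]
  [MeasurableSpace E']

lemma measurable_apply (hZ : ∀ n, Measurable (Z n)) {F : E → Y → E'}
    (hF : ∀ z, Measurable fun x => F x z) {n : ℕ} {x : Ω → E}
    (hx : Measurable[pastFiltration hZ n] x) :
    Measurable[pastFiltration hZ (n + 1)] fun ω => F (x ω) (Z n ω) :=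
  (measurable_from_prod_countable_left (f := fun y : E × Y => F y.1 y.2) hF).comp
    ((hx.mono ((pastFiltration hZ).mono n.le_succ) le_rfl).prodMk (measurable_succ hZ n))

lemma measurable_of_recursion (hZ : ∀ n, Measurable (Z n)) {F : ℕ → E → Y → E}
    (hF : ∀ n z, Measurable fun x => F n x z) {x : ℕ → Ω → E} {x₀ : E} (hx0 : ∀ ω, x 0 ω = x₀)
    (hx : ∀ n ω, x (n + 1) ω = F n (x n ω) (Z n ω)) (n : ℕ) :
    Measurable[pastFiltration hZ n] (x n) := by
  induction n with
  | zero =>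
    rw [funext hx0]
    exact measurable_const
  | succ n ih =>
    rw [funext (hx n)]
    exact measurable_apply hZ (hF n) ih

end pastFiltration

lemma eq_infinitePi_of_cylinder {X : ℕ → Type*} [∀ n, MeasurableSpace (X n)]
    [∀ n, Countable (X n)] [∀ n, MeasurableSingletonClass (X n)] {ν : ∀ n, Measure (X n)}
    [∀ n, IsProbabilityMeasure (ν n)] {μ : Measure (∀ n, X n)}
    (hμ : ∀ n (x : ∀ n, X n), μ {ω | ∀ i ≤ n, ω i = x i} = ∏ i ∈ range (n + 1), ν i {x i}) :
    μ = Measure.infinitePi ν := by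
  refine ((Measure.isProjectiveLimit_infinitePi ν).unique ?_).symm
  refine (isProjectiveLimit_nat_iff (isProjectiveMeasureFamily_pi ν) μ).2 fun n => ?_
  refine Measure.ext_of_singleton fun y => ?_
  have hne : ∀ i, Nonempty (X i) := fun i => (ν i).nonempty_of_neZero
  obtain ⟨x, rfl⟩ : ∃ x : ∀ i, X i, Preorder.frestrictLe n x = y := by
    classical
    exact ⟨fun i => if h : i ∈ Iic n then y ⟨i, h⟩ else Classical.arbitrary _, by
      ext i
      simp [mem_Iic.1 i.2]⟩
  have hcyl : Preorder.frestrictLe n ⁻¹' {Preorder.frestrictLe n x} = {ω | ∀ i ≤ n, ω i = x i} := by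
    ext ω
    simp [funext_iff]
  rw [Measure.map_apply (by fun_prop) (measurableSet_singleton _), hcyl, hμ, Measure.pi_singleton,
    Nat.range_succ_eq_Iic, ← prod_coe_sort]
  rfl

lemma iIndepFun_and_measureReal_preimage_of_cylinder {Y : Type*} [MeasurableSpace Y] [Countable Y]
    [MeasurableSingletonClass Y] {ρ : Y → ℝ} (hρ : ∀ z, 0 ≤ ρ z) {μ : Measure (ℕ → Y)}
    [IsProbabilityMeasure μ]
    (hμ : ∀ n (x : ℕ → Y),
      μ {ω | ∀ i ≤ n, ω i = x i} = ENNReal.ofReal (∏ i ∈ range (n + 1), ρ (x i))) :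
    iIndepFun (fun n (ω : ℕ → Y) => ω n) μ ∧ ∀ n z, μ.real ((fun ω => ω n) ⁻¹' {z}) = ρ z := by
  set ν : Measure Y := μ.map fun ω => ω 0
  have : IsProbabilityMeasure ν :=
    Measure.isProbabilityMeasure_map (measurable_pi_apply 0).aemeasurable
  have hν : ∀ z, ν {z} = ENNReal.ofReal (ρ z) := fun z => by
    rw [Measure.map_apply (measurable_pi_apply 0) (measurableSet_singleton z)]
    simpa using! hμ 0 fun _ => z
  have hprod : μ = Measure.infinitePi fun _ => ν := eq_infinitePi_of_cylinder fun n x => by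
    simp only [hμ, hν, ENNReal.ofReal_prod_of_nonneg fun i _ => hρ (x i)]
  have hmap : ∀ n, μ.map (fun ω => ω n) = ν := fun n => by
    rw [hprod]
    exact Measure.infinitePi_map_eval (fun _ => ν) n
  constructor
  · rw [hprod]
    exact iIndepFun_infinitePi (X := fun _ z => z) fun _ => measurable_id
  · intro n z
    rw [← map_measureReal_apply (measurable_pi_apply n) (measurableSet_singleton z), hmap,
      Measure.real, hν, ENNReal.toReal_ofReal (hρ z)]

end Independence

lemma pos_of_vecMul_eq_self_s18 {Y R : Type*} [Fintype Y] [DecidableEq Y] [Semiring R] [PartialOrder R]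
    [IsStrictOrderedRing R] {P : Matrix Y Y R} (hP : ∀ i j, 0 ≤ P i j)
    (hirr : ∀ i j, ∃ n : ℕ, 0 < (P ^ n) i j) {m : Y → R} (hm : ∀ i, 0 ≤ m i) (hm0 : m ≠ 0)
    (hstat : m ᵥ* P = m) (j : Y) : 0 < m j := by
  have hpow : ∀ n : ℕ, m ᵥ* P ^ n = m := fun n => by
    induction n with
    | zero => simp
    | succ n ih => rw [pow_succ, ← vecMul_vecMul, ih, hstat]
  obtain ⟨i, hi⟩ := Function.ne_iff.1 hm0
  obtain ⟨n, hn⟩ := hirr i j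
  rw [← hpow n]
  exact sum_pos' (fun k _ => mul_nonneg (hm k) (pow_apply_nonneg hP n k j))
    ⟨i, mem_univ i, mul_pos ((hm i).lt_of_ne' hi) hn⟩

lemma dist_iSup_le {ι : Type*} [Fintype ι] [Nonempty ι] (f g : ι → ℝ) :
    dist (⨆ i, f i) (⨆ i, g i) ≤ dist f g := by
  have hle : ∀ f g : ι → ℝ, ⨆ i, f i ≤ (⨆ i, g i) + dist f g := fun f g => ciSup_le fun i => by
    have hi := (le_abs_self _).trans (dist_le_pi_dist f g i)
    linarith [le_ciSup (Finite.bddAbove_range g) i]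
  rw [Real.dist_eq, abs_sub_le_iff]
  constructor <;> linarith [hle f g, hle g f, dist_comm f g]

lemma abs_iSup_le_norm {ι : Type*} [Fintype ι] [Nonempty ι] (f : ι → ℝ) :
    |⨆ i, f i| ≤ ‖f‖ := by
  simpa using dist_iSup_le f 0

/-- The Krasnoselskii–Mann relaxation of the operator `T`, with one weight per coordinate. -/
def relaxation {ι : Type*} (w : ι → ℝ) (T : (ι → ℝ) → ι → ℝ) (q : ι → ℝ) : ι → ℝ :=
  q + w * (T q - q)

lemma dist_relaxation_le {ι : Type*} [Fintype ι] [Nonempty ι] {w : ι → ℝ} {m κ : ℝ} (hm : 0 ≤ m)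
    (hmw : ∀ i, m ≤ w i) (hw : ∀ i, w i ≤ 1) (hκ : κ ≤ 1) {T : (ι → ℝ) → ι → ℝ}
    {q qstar : ι → ℝ} (hT : dist (T q) qstar ≤ κ * dist q qstar) :
    dist (relaxation w T q) qstar ≤ (1 - m * (1 - κ)) * dist q qstar := by
  refine dist_pi_le_iff'.2 fun i => ?_
  have hw0 : 0 ≤ w i := hm.trans (hmw i)
  have hrate : m * (1 - κ) ≤ w i * (1 - κ) := mul_le_mul_of_nonneg_right (hmw i) (sub_nonneg.2 hκ)
  have hq := dist_le_pi_dist q qstar i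
  have hTq := (dist_le_pi_dist (T q) qstar i).trans hT
  rw [Real.dist_eq] at hq hTq ⊢
  calc |relaxation w T q i - qstar i|
      = |(1 - w i) * (q i - qstar i) + w i * (T q i - qstar i)| := by
        simp only [relaxation, Pi.add_apply, Pi.mul_apply, Pi.sub_apply]
        ring_nf
    _ ≤ (1 - w i) * |q i - qstar i| + w i * |T q i - qstar i| := by
        refine (abs_add_le _ _).trans_eq ?_
        rw [abs_mul, abs_mul, abs_of_nonneg (sub_nonneg.2 (hw i)), abs_of_nonneg hw0]
    _ ≤ (1 - w i) * dist q qstar + w i * (κ * dist q qstar) := by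
        gcongr
        exact sub_nonneg.2 (hw i)
    _ = (1 - w i * (1 - κ)) * dist q qstar := by ring
    _ ≤ (1 - m * (1 - κ)) * dist q qstar := by gcongr

section BellmanOperator

variable {S A : Type*} [Fintype S] [Fintype A] [Nonempty A] {r : S × A → ℝ} {γ : ℝ}

lemma dist_bellmanOpt_le {p : S × A → S → ℝ} (hp : ∀ y s, 0 ≤ p y s)
    (hpsum : ∀ y, ∑ s, p y s = 1) (hγ : 0 ≤ γ) (q q' : S × A → ℝ) :
    dist (bellmanOpt r p γ q) (bellmanOpt r p γ q') ≤ γ * dist q q' := by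
  have hmax : ∀ s, dist (⨆ a, q (s, a)) (⨆ a, q' (s, a)) ≤ dist q q' := fun s =>
    (dist_iSup_le _ _).trans <| (dist_pi_le_iff dist_nonneg).2 fun a => dist_le_pi_dist q q' (s, a)
  refine (dist_pi_le_iff (by positivity)).2 fun y => ?_
  calc dist (bellmanOpt r p γ q y) (bellmanOpt r p γ q' y)
      = γ * |∑ s, p y s * ((⨆ a, q (s, a)) - ⨆ a, q' (s, a))| := by
        rw [Real.dist_eq, bellmanOpt, bellmanOpt, add_sub_add_left_eq_sub, ← mul_sub, abs_mul,
          abs_of_nonneg hγ]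
        simp only [mul_sub, sum_sub_distrib]
    _ ≤ γ * ∑ s, p y s * dist q q' := by
        gcongr
        refine (abs_sum_le_sum_abs _ _).trans (sum_le_sum fun s _ => ?_)
        rw [abs_mul, abs_of_nonneg (hp y s)]
        exact mul_le_mul_of_nonneg_left (hmax s) (hp y s)
    _ = γ * dist q q' := by rw [← sum_mul, hpsum, one_mul]

lemma abs_iSup_action_le_norm (q : S × A → ℝ) (s : S) : |⨆ a, q (s, a)| ≤ ‖q‖ :=
  (abs_iSup_le_norm _).trans <| (pi_norm_le_iff_of_nonneg (norm_nonneg q)).2 fun a =>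
    norm_le_pi_norm q (s, a)

lemma abs_tdTarget_le (hγ : 0 ≤ γ) (q : S × A → ℝ) (y : S × A) (s : S) :
    |r y + γ * ⨆ a, q (s, a)| ≤ ‖r‖ + γ * ‖q‖ := by
  refine (abs_add_le _ _).trans (add_le_add (norm_le_pi_norm r y) ?_)
  rw [abs_mul, abs_of_nonneg hγ]
  gcongr
  exact abs_iSup_action_le_norm q s

end BellmanOperator

section QLearning

variable {S A : Type*} [DecidableEq S] [DecidableEq A]

/-- The temporal-difference increment that Q-learning adds, scaled by the step size, to the
iterate `q` upon observing the state-action pair `z.1` and the successor state `z.2`. -/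
noncomputable def tdIncrement (r : S × A → ℝ) (γ : ℝ) (q : S × A → ℝ) (z : (S × A) × S) :
    S × A → ℝ :=
  Pi.single z.1 (r z.1 + γ * (⨆ b, q (z.2, b)) - q z.1)

lemma measurable_tdIncrement [Countable A] (r : S × A → ℝ) (γ : ℝ) (z : (S × A) × S) :
    Measurable fun q => tdIncrement r γ q z := by
  refine measurable_pi_iff.2 fun y => ?_
  simp only [tdIncrement, Pi.single_apply]
  split_ifs <;> fun_prop

variable [Fintype S] [Fintype A]

lemma sum_mul_tdIncrement {p : S × A → S → ℝ} (hpsum : ∀ y, ∑ s, p y s = 1) (w r : S × A → ℝ)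
    (γ : ℝ) (q : S × A → ℝ) (y : S × A) :
    ∑ z : (S × A) × S, w z.1 * p z.1 z.2 * tdIncrement r γ q z y =
      relaxation w (bellmanOpt r p γ) q y - q y := by
  have hterm : ∀ z : (S × A) × S, w z.1 * p z.1 z.2 * tdIncrement r γ q z y =
      if y = z.1 then w y * (p y z.2 * (r y - q y) + γ * (p y z.2 * ⨆ b, q (z.2, b))) else 0 := by
    intro z
    rw [tdIncrement, Pi.single_apply]
    split_ifs with h
    · rw [h]
      ring
    · rw [mul_zero]
  simp only [hterm, Fintype.sum_prod_type_right, sum_ite_eq, mem_univ, if_true]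
  rw [← mul_sum, sum_add_distrib, ← sum_mul, hpsum, ← mul_sum]
  simp only [relaxation, bellmanOpt, Pi.add_apply, Pi.mul_apply, Pi.sub_apply]
  ring

variable [Nonempty A] {r : S × A → ℝ} {γ : ℝ}

lemma norm_tdIncrement_le (hγ : 0 ≤ γ) (q : S × A → ℝ) (z : (S × A) × S) :
    ‖tdIncrement r γ q z‖ ≤ ‖r‖ + γ * ‖q‖ + ‖q‖ := by
  rw [tdIncrement, Pi.norm_single]
  exact (norm_sub_le _ _).trans
    (add_le_add (abs_tdTarget_le hγ q z.1 z.2) (norm_le_pi_norm q z.1))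

-- Steps with `1 < a` overshoot the target; as `|1 - a| + a ≤ 1 + a ^ 2`, the expansion factors
-- still have a convergent product along square-summable step sizes.
lemma norm_add_smul_tdIncrement_le {a B : ℝ} (ha : 0 ≤ a) (hγ : 0 ≤ γ)
    (hr : ‖r‖ ≤ (1 - γ) * B) {q : S × A → ℝ} (hq : ‖q‖ ≤ B) (z : (S × A) × S) :
    ‖q + a • tdIncrement r γ q z‖ ≤ (1 + a ^ 2) * B := by
  have hB : 0 ≤ B := (norm_nonneg q).trans hq
  refine (pi_norm_le_iff_of_nonneg (by positivity)).2 fun y => ?_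
  have hqy : |q y| ≤ B := (norm_le_pi_norm q y).trans hq
  have htarget : |r y + γ * ⨆ b, q (z.2, b)| ≤ B := by
    linarith [abs_tdTarget_le (r := r) hγ q y z.2, mul_le_mul_of_nonneg_left hq hγ]
  have hfactor : |1 - a| + a ≤ 1 + a ^ 2 := by
    cases abs_cases (1 - a) <;> nlinarith [sq_nonneg (a - 1)]
  rw [Pi.add_apply, Pi.smul_apply, tdIncrement, Pi.single_apply, Real.norm_eq_abs, smul_eq_mul]
  split_ifs with hy
  · calc |q y + a * (r z.1 + γ * (⨆ b, q (z.2, b)) - q z.1)|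
        = |(1 - a) * q y + a * (r y + γ * ⨆ b, q (z.2, b))| := by
          rw [← hy]
          ring_nf
      _ ≤ |1 - a| * |q y| + a * |r y + γ * ⨆ b, q (z.2, b)| := by
          refine (abs_add_le _ _).trans_eq ?_
          rw [abs_mul, abs_mul, abs_of_nonneg ha]
      _ ≤ |1 - a| * B + a * B := by gcongr
      _ = (|1 - a| + a) * B := by ring
      _ ≤ (1 + a ^ 2) * B := by gcongr
  · rw [mul_zero, add_zero]
    nlinarith [mul_nonneg (sq_nonneg a) hB]

lemma norm_QLearning_le (hγ0 : 0 ≤ γ) (hγ1 : γ < 1) {α : ℕ → ℝ} (hα : ∀ t, 0 ≤ α t)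
    (hαsq : Summable fun t => α t ^ 2) {q : ℕ → S × A → ℝ} {z : ℕ → (S × A) × S}
    (hq : ∀ t, q (t + 1) = q t + α t • tdIncrement r γ (q t) (z t)) (t : ℕ) :
    ‖q t‖ ≤ max ‖q 0‖ (‖r‖ / (1 - γ)) * Real.exp (∑' k, α k ^ 2) := by
  have hγ : 0 < 1 - γ := sub_pos.2 hγ1
  set u : ℕ → ℝ := fun t => max ‖q t‖ (‖r‖ / (1 - γ)) with hu
  have hu0 : ∀ t, 0 ≤ u t := fun t => (norm_nonneg _).trans (le_max_left _ _)
  have hstep : ∀ t ≥ 0, u (t + 1) ≤ (1 + α t ^ 2) * u t + 0 := fun t _ => by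
    rw [add_zero, hu]
    refine max_le ?_ ?_
    · rw [hq]
      exact norm_add_smul_tdIncrement_le (hα t) hγ0
        ((div_le_iff₀' hγ).1 (le_max_right _ _)) (le_max_left _ _) (z t)
    · exact (le_max_right _ _).trans
        (le_mul_of_one_le_left (hu0 t) (le_add_of_nonneg_right (sq_nonneg _)))
  have hgronwall := discrete_gronwall (hu0 0) hstep (fun k _ => sq_nonneg (α k))
    (fun _ _ => le_rfl) t.zero_le
  calc ‖q t‖ ≤ u t := le_max_left _ _
    _ ≤ u 0 * Real.exp (∑ k ∈ range t, α k ^ 2) := by simpa using hgronwall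
    _ ≤ u 0 * Real.exp (∑' k, α k ^ 2) := by
        gcongr
        exact hαsq.sum_le_tsum _ fun k _ => sq_nonneg _

end QLearning

section Convergence

open ProbabilityTheory

lemma norm_relaxation_bellmanOpt_sub_le {S A : Type*} [Fintype S] [Fintype A] [Nonempty S]
    [Nonempty A] {r : S × A → ℝ} {p : S × A → S → ℝ} (hp : ∀ y s, 0 ≤ p y s)
    (hpsum : ∀ y, ∑ s, p y s = 1) {γ : ℝ} (hγ0 : 0 ≤ γ) (hγ1 : γ ≤ 1) {w : S × A → ℝ} {m : ℝ}
    (hm : 0 ≤ m) (hmw : ∀ y, m ≤ w y) (hw : ∀ y, w y ≤ 1) {qstar : S × A → ℝ}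
    (hqstar : bellmanOpt r p γ qstar = qstar) (q : S × A → ℝ) :
    ‖relaxation w (bellmanOpt r p γ) q - qstar‖ ≤ (1 - m * (1 - γ)) * ‖q - qstar‖ := by
  simp only [← dist_eq_norm]
  refine dist_relaxation_le hm hmw hw hγ1 ?_
  simpa only [hqstar] using dist_bellmanOpt_le (r := r) hp hpsum hγ0 q qstar

variable {S A Ω : Type*} [Fintype S] [Fintype A] [DecidableEq S] [DecidableEq A]
  [MeasurableSpace S] [MeasurableSingletonClass S] [MeasurableSpace A] [MeasurableSingletonClass A]
  {mΩ : MeasurableSpace Ω} {μ : Measure Ω} {r : S × A → ℝ} {p : S × A → S → ℝ} {γ : ℝ}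
  {w : S × A → ℝ}

lemma condExp_tdIncrement_of_indep [Nonempty A] [IsFiniteMeasure μ]
    (hpsum : ∀ y, ∑ s, p y s = 1) (hγ : 0 ≤ γ) {Z : Ω → (S × A) × S} (hZ : Measurable Z)
    {m : MeasurableSpace Ω} (hm : m ≤ mΩ)
    (hindep : Indep (MeasurableSpace.comap Z inferInstance) m μ)
    (hlaw : ∀ z, μ.real (Z ⁻¹' {z}) = w z.1 * p z.1 z.2) {q : Ω → S × A → ℝ}
    (hq : Measurable[m] q) {B : ℝ} (hB : ∀ ω, ‖q ω‖ ≤ B) (y : S × A) :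
    μ[fun ω => tdIncrement r γ (q ω) (Z ω) y | m] =ᵐ[μ]
      fun ω => relaxation w (bellmanOpt r p γ) (q ω) y - q ω y := by
  have htd_meas : ∀ z, StronglyMeasurable[m] fun ω => tdIncrement r γ (q ω) z y := fun z =>
    ((measurable_pi_apply y).comp ((measurable_tdIncrement r γ z).comp hq)).stronglyMeasurable
  have htd_int : ∀ z, Integrable (fun ω => tdIncrement r γ (q ω) z y) μ := fun z => by
    refine .of_bound ((htd_meas z).mono hm).aestronglyMeasurable (‖r‖ + γ * B + B) (.of_forall ?_)
    intro ω
    refine (norm_le_pi_norm _ y).trans ((norm_tdIncrement_le hγ (q ω) z).trans ?_)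
    gcongr <;> exact hB ω
  filter_upwards [condExp_apply_of_indep hZ hm hindep htd_meas htd_int] with ω hω
  simp only [hω, hlaw, sum_mul_tdIncrement hpsum]

theorem ae_tendsto_of_QLearning_iid_general
    (hp : ∀ y s, 0 ≤ p y s) (hpsum : ∀ y, ∑ s, p y s = 1) (hγ0 : 0 ≤ γ) (hγ1 : γ < 1)
    {qstar : S × A → ℝ} (hqstar : bellmanOpt r p γ qstar = qstar)
    (hw : ∀ y, 0 < w y) (hwsum : ∑ y, w y = 1)
    {α : ℕ → ℝ} (hα : ∀ t, 0 ≤ α t) (hαsum : Tendsto (fun n => ∑ k ∈ range n, α k) atTop atTop)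
    (hαsq : Summable fun t => α t ^ 2)
    {Z : ℕ → Ω → (S × A) × S} (hZ : ∀ t, Measurable (Z t)) (hindep : iIndepFun Z μ)
    (hlaw : ∀ t z, μ.real (Z t ⁻¹' {z}) = w z.1 * p z.1 z.2)
    {q₀ : S × A → ℝ} {q : ℕ → Ω → S × A → ℝ} (hq0 : ∀ ω, q 0 ω = q₀)
    (hq : ∀ t ω, q (t + 1) ω = q t ω + α t • tdIncrement r γ (q t ω) (Z t ω)) :
    ∀ᵐ ω ∂μ, Tendsto (fun t => q t ω) atTop (nhds qstar) := by
  have := hindep.isProbabilityMeasure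
  obtain ⟨y, -, -⟩ := exists_ne_zero_of_sum_ne_zero (hwsum ▸ one_ne_zero)
  have : Nonempty (S × A) := ⟨y⟩
  have : Nonempty S := ⟨y.1⟩
  have : Nonempty A := ⟨y.2⟩
  obtain ⟨y₀, hy₀⟩ := Finite.exists_min w
  have hw1 : ∀ y, w y ≤ 1 := fun y => hwsum ▸ single_le_sum (fun y _ => (hw y).le) (mem_univ y)
  have hκ1 : 1 - w y₀ * (1 - γ) < 1 := sub_lt_self _ (mul_pos (hw y₀) (sub_pos.2 hγ1))
  have hκ0 : 0 ≤ 1 - w y₀ * (1 - γ) :=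
    sub_nonneg.2 (mul_le_one₀ (hw1 y₀) (sub_nonneg.2 hγ1.le) (sub_le_self 1 hγ0))
  set B : ℝ := max ‖q₀‖ (‖r‖ / (1 - γ)) * Real.exp (∑' k, α k ^ 2)
  have hB : ∀ t ω, ‖q t ω‖ ≤ B := fun t ω => by
    simpa only [hq0] using norm_QLearning_le (q := fun t => q t ω) (z := fun t => Z t ω)
      hγ0 hγ1 hα hαsq (fun t => hq t ω) t
  have hq_meas : ∀ t, Measurable[pastFiltration hZ t] (q t) :=
    pastFiltration.measurable_of_recursion hZ (F := fun t x z => x + α t • tdIncrement r γ x z)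
      (fun t z => measurable_id.add ((measurable_tdIncrement r γ z).const_smul (α t))) hq0 hq
  have hU_meas : ∀ t y, StronglyMeasurable[pastFiltration hZ (t + 1)]
      fun ω => tdIncrement r γ (q t ω) (Z t ω) y := fun t y =>
    ((measurable_pi_apply y).comp (pastFiltration.measurable_apply hZ
      (measurable_tdIncrement r γ) (hq_meas t))).stronglyMeasurable
  refine ae_tendsto_of_stochastic_approximation hκ0 hκ1
    (norm_relaxation_bellmanOpt_sub_le hp hpsum hγ0 hγ1.le (hw y₀).le hy₀ hw1 hqstar)
    hα hαsum hαsq hU_meas (C := ‖r‖ + γ * B + B) (fun t => .of_forall fun ω => ?_)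
    (fun t y => ?_) hq
  · refine (norm_tdIncrement_le hγ0 _ _).trans ?_
    gcongr <;> exact hB t ω
  · exact condExp_tdIncrement_of_indep hpsum hγ0 (hZ t) ((pastFiltration hZ).le t)
      (pastFiltration.indep hZ hindep t) (hlaw t) (hq_meas t) (hB t) y

end Convergence

/-- Almost sure convergence of Q-learning with i.i.d. samples: at each step `t` an
independent tuple is drawn with `(S_t, A_t) ~ μd` (the stationary distribution of the
irreducible aperiodic chain on `S × A` induced by the behavior policy `π`) and
`S_{t+1} ~ p(·|S_t, A_t)`; the sample space carries the i.i.d. product measure,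
characterized here via cylinder probabilities. Under Robbins–Monro step sizes the
Q-learning iterates converge almost surely to the optimal action-value function. -/
theorem ae_tendsto_of_QLearning_iid
    [DecidableEq S] [DecidableEq A]
    [MeasurableSpace S] [MeasurableSingletonClass S]
    [MeasurableSpace A] [MeasurableSingletonClass A]
    -- the MDP
    (r : S × A → ℝ) (p : S × A → S → ℝ)
    (hpnonneg : ∀ y s', 0 ≤ p y s') (hpsum : ∀ y, ∑ s', p y s' = 1)
    (γ : ℝ) (hγ0 : 0 ≤ γ) (hγ1 : γ < 1)
    -- the optimal action-value function
    (qstar : S × A → ℝ) (hqstar : bellmanOpt r p γ qstar = qstar)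
    -- the behavior policy and the induced chain on S × A
    (π : S → A → ℝ) (hπnonneg : ∀ s a, 0 ≤ π s a) (hπsum : ∀ s, ∑ a, π s a = 1)
    (Pind : Matrix (S × A) (S × A) ℝ)
    (hPind : Pind = fun y y' => p y y'.1 * π y'.1 y'.2)
    (hirr : ∀ y y', ∃ n : ℕ, 0 < (Pind ^ n) y y')
    (haper : ∀ y, ∀ e : ℕ, (∀ n ∈ returnTimes Pind y, e ∣ n) → e = 1)
    -- the stationary distribution of the induced chain
    (μd : S × A → ℝ) (hμdnonneg : ∀ y, 0 ≤ μd y) (hμdsum : ∑ y, μd y = 1)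
    (hμdstat : ∀ y', ∑ y, μd y * Pind y y' = μd y')
    -- Robbins–Monro step sizes
    (α : ℕ → ℝ) (hαpos : ∀ t, 0 < α t)
    (hαsum : Tendsto (fun n => ∑ k ∈ Finset.range n, α k) atTop atTop)
    (hαsqsum : Summable (fun t => (α t) ^ 2))
    -- the i.i.d. product measure over tuples ((S_t, A_t), S_{t+1})
    (μ : Measure (ℕ → (S × A) × S)) [IsProbabilityMeasure μ]
    (hμ : ∀ (n : ℕ) (ys : ℕ → (S × A) × S),
      μ {ω | ∀ i ≤ n, ω i = ys i} =
        ENNReal.ofReal (∏ i ∈ Finset.range (n + 1), μd (ys i).1 * p (ys i).1 (ys i).2))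
    -- the Q-learning iterates
    (q₀ : S × A → ℝ) (q : ℕ → (ℕ → (S × A) × S) → (S × A → ℝ))
    (hq0 : ∀ ω, q 0 ω = q₀)
    (hqstep : ∀ t ω y, q (t + 1) ω y = q t ω y +
      α t * (r (ω t).1 + γ * (⨆ b, q t ω ((ω t).2, b)) - q t ω (ω t).1)
        * (if y = (ω t).1 then 1 else 0)) :
    ∀ᵐ ω ∂μ, Tendsto (fun t => q t ω) atTop (nhds qstar) := by
  have hPnonneg : ∀ y y', 0 ≤ Pind y y' := fun y y' =>
    hPind ▸ mul_nonneg (hpnonneg y y'.1) (hπnonneg y'.1 y'.2)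
  have hμd0 : μd ≠ 0 := by
    rintro rfl
    simp at hμdsum
  have hμdpos : ∀ y, 0 < μd y :=
    pos_of_vecMul_eq_self_s18 hPnonneg hirr hμdnonneg hμd0 (funext hμdstat)
  obtain ⟨hindep, hlaw⟩ := iIndepFun_and_measureReal_preimage_of_cylinder
    (ρ := fun z : (S × A) × S => μd z.1 * p z.1 z.2)
    (fun z => mul_nonneg (hμdnonneg z.1) (hpnonneg z.1 z.2)) hμ
  refine ae_tendsto_of_QLearning_iid_general hpnonneg hpsum hγ0 hγ1 hqstar hμdpos hμdsum
    (fun t => (hαpos t).le) hαsum hαsqsum measurable_pi_apply hindep hlaw hq0 fun t ω => ?_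
  ext y
  simp [hqstep, tdIncrement, Pi.single_apply]
end
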